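/- Define θ_3F on A = ZMod 2 × ZMod 2 by θ_3F(p,q) = (−1)^(p.val + p.val·q.val + q.val), so θ_3F(0,0) = 1 and θ_3F(x) = −1 for each of the three nonzero x. Then (i) θ_3F is an exchange-statistics function on A whose braiding satisfies B_3F(x,y) = −1 for all distinct nonzero x, y ∈ A; and (ii) (A, θ_3F) admits no Lagrangian subgroup. -/

import Mathlib

/-- The braiding associated to an exchange-statistics function `θ`:
`B(a,b) = θ(a+b) · θ(a)⁻¹ · θ(b)⁻¹`. -/
noncomputable def braiding {A : Type*} [AddCommGroup A] (θ : A → ℂ) (a b : A) : ℂ :=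
  θ (a + b) * (θ a)⁻¹ * (θ b)⁻¹

/-- An exchange-statistics function (Abelian anyon theory) on an additive abelian
group `A`: a unimodular map `θ : A → ℂ` with `θ 0 = 1`, `θ (-a) = θ a`, whose
associated braiding is biadditive. -/
structure IsExchangeStats {A : Type*} [AddCommGroup A] (θ : A → ℂ) : Prop where
  abs_eq_one : ∀ a, ‖θ a‖ = 1
  map_zero : θ 0 = 1
  map_neg : ∀ a, θ (-a) = θ a
  braiding_add_left : ∀ a a' b, braiding θ (a + a') b = braiding θ a b * braiding θ a' b
  braiding_add_right : ∀ a b b', braiding θ a (b + b') = braiding θ a b * braiding θ a b'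

/-- A Lagrangian subgroup of an Abelian anyon theory `(A, θ)`. -/
def IsLagrangian {A : Type*} [AddCommGroup A] (θ : A → ℂ) (L : AddSubgroup A) : Prop :=
  (∀ c ∈ L, θ c = 1) ∧ (∀ c ∈ L, ∀ c' ∈ L, braiding θ c c' = 1) ∧
  (∀ a : A, a ∉ L → ∃ c ∈ L, braiding θ a c ≠ 1)

/-- The three-fermion exchange statistics on `ZMod 2 × ZMod 2`:
`θ_3F(p,q) = (-1)^(p + pq + q)`, so all three nonzero anyons are fermions. -/
noncomputable def theta3F (a : ZMod 2 × ZMod 2) : ℂ :=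
  (-1 : ℂ) ^ (a.1.val + a.1.val * a.2.val + a.2.val)

/-! The exponent `p + pq + q` is, modulo `2`, the norm form `p² + pq + q²` of `𝔽₄` over `𝔽₂`.
Composing a quadratic form with a unitary character always gives exchange statistics, because the
braiding is the character of the polar form. As the norm form is anisotropic, no nonzero anyon is a
boson, so a Lagrangian subgroup would be trivial; but the trivial subgroup braids trivially with
everything, hence is Lagrangian only in the trivial group. -/

section ExchangeStats

variable {A : Type*} [AddCommGroup A] {θ : A → ℂ}

theorem braiding_eq_neg_one_of_eq_neg_one {a b : A} (ha : θ a = -1) (hb : θ b = -1)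
    (hab : θ (a + b) = -1) : braiding θ a b = -1 := by
  rw [braiding, ha, hb, hab]
  norm_num

theorem braiding_addChar_comp {N : Type*} [AddCommGroup N] (χ : AddChar N ℂ) (f : A → N)
    (a b : A) : braiding (fun x => χ (f x)) a b = χ (QuadraticMap.polar f a b) := by
  simp only [braiding, QuadraticMap.polar, AddChar.map_sub_eq_div, div_eq_mul_inv]

theorem isExchangeStats_addChar_comp_quadraticMap {R N : Type*} [CommRing R] [Module R A]
    [AddCommGroup N] [Module R N] (Q : QuadraticMap R A N) (χ : AddChar N ℂ)
    (hχ : ∀ n, ‖χ n‖ = 1) : IsExchangeStats fun a => χ (Q a) where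
  abs_eq_one a := hχ (Q a)
  map_zero := by rw [Q.map_zero, χ.map_zero_eq_one]
  map_neg a := by rw [Q.map_neg]
  braiding_add_left a a' b := by
    simp only [braiding_addChar_comp, QuadraticMap.polar_add_left, AddChar.map_add_eq_mul]
  braiding_add_right a b b' := by
    simp only [braiding_addChar_comp, QuadraticMap.polar_add_right, AddChar.map_add_eq_mul]

theorem IsExchangeStats.ne_zero (hθ : IsExchangeStats θ) (a : A) : θ a ≠ 0 :=
  norm_ne_zero_iff.mp (by rw [hθ.abs_eq_one a]; exact one_ne_zero)

theorem IsExchangeStats.braiding_zero_right (hθ : IsExchangeStats θ) (a : A) :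
    braiding θ a 0 = 1 := by
  rw [braiding, add_zero, hθ.map_zero, inv_one, mul_one, mul_inv_cancel₀ (hθ.ne_zero a)]

theorem IsLagrangian.eq_bot {L : AddSubgroup A} (hL : IsLagrangian θ L)
    (hboson : ∀ a, θ a = 1 → a = 0) : L = ⊥ :=
  L.eq_bot_iff_forall.mpr fun c hc => hboson c (hL.1 c hc)

theorem IsExchangeStats.not_isLagrangian_bot [Nontrivial A] (hθ : IsExchangeStats θ) :
    ¬ IsLagrangian θ ⊥ := by
  rintro ⟨-, -, hdetect⟩
  obtain ⟨a, ha⟩ := exists_ne (0 : A)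
  obtain ⟨c, hc, hac⟩ := hdetect a (mt AddSubgroup.mem_bot.mp ha)
  rw [AddSubgroup.mem_bot.mp hc] at hac
  exact hac (hθ.braiding_zero_right a)

theorem IsExchangeStats.not_isLagrangian_of_forall_eq_zero [Nontrivial A]
    (hθ : IsExchangeStats θ) (hboson : ∀ a, θ a = 1 → a = 0) (L : AddSubgroup A) :
    ¬ IsLagrangian θ L := fun hL =>
  hθ.not_isLagrangian_bot (hL.eq_bot hboson ▸ hL)

end ExchangeStats

section ThreeFermion

/-- The quadratic form `p² + pq + q²` over `ZMod 2`, whose sign character is `theta3F`. It is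
assembled from products of coordinate functionals so that it is quadratic by construction. -/
def threeFermionForm : QuadraticForm (ZMod 2) (ZMod 2 × ZMod 2) :=
  let p := LinearMap.fst (ZMod 2) (ZMod 2) (ZMod 2)
  let q := LinearMap.snd (ZMod 2) (ZMod 2) (ZMod 2)
  QuadraticMap.linMulLin p p + QuadraticMap.linMulLin p q + QuadraticMap.linMulLin q q

/-- The nontrivial character `n ↦ (-1)ⁿ` of `ZMod 2`. -/
noncomputable def signChar : AddChar (ZMod 2) ℂ :=
  AddChar.zmodChar 2 (neg_one_sq (R := ℂ))

theorem signChar_natCast (n : ℕ) : signChar n = (-1) ^ n :=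
  AddChar.zmodChar_apply' neg_one_sq n

theorem threeFermionForm_apply (a : ZMod 2 × ZMod 2) :
    threeFermionForm a = a.1 + a.1 * a.2 + a.2 := by
  have mul_self (n : ZMod 2) : n * n = n := by rw [← sq, ZMod.pow_card]
  simp [threeFermionForm, mul_self]

theorem theta3F_eq_signChar_comp : theta3F = fun a => signChar (threeFermionForm a) := by
  funext a
  simp only [theta3F, ← signChar_natCast, threeFermionForm_apply, Nat.cast_add, Nat.cast_mul,
    ZMod.natCast_zmod_val]

theorem isExchangeStats_theta3F : IsExchangeStats theta3F :=
  theta3F_eq_signChar_comp ▸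
    isExchangeStats_addChar_comp_quadraticMap threeFermionForm signChar signChar.norm_apply

theorem threeFermionForm_anisotropic : threeFermionForm.Anisotropic := by
  simp only [QuadraticMap.Anisotropic, threeFermionForm_apply]
  decide

theorem theta3F_of_ne_zero {a : ZMod 2 × ZMod 2} (ha : a ≠ 0) : theta3F a = -1 := by
  have form_eq_one : threeFermionForm a = 1 :=
    Fin.eq_one_of_ne_zero _ (mt (threeFermionForm_anisotropic a) ha)
  rw [theta3F_eq_signChar_comp]
  simpa [form_eq_one] using signChar_natCast 1

theorem eq_zero_of_theta3F_eq_one {a : ZMod 2 × ZMod 2} (ha : theta3F a = 1) : a = 0 := by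
  by_contra ha0
  rw [theta3F_of_ne_zero ha0] at ha
  norm_num at ha

theorem braiding_theta3F_of_ne {x y : ZMod 2 × ZMod 2} (hx : x ≠ 0) (hy : y ≠ 0) (hxy : x ≠ y) :
    braiding theta3F x y = -1 :=
  braiding_eq_neg_one_of_eq_neg_one (theta3F_of_ne_zero hx) (theta3F_of_ne_zero hy)
    (theta3F_of_ne_zero (mt CharTwo.add_eq_zero.mp hxy))

end ThreeFermion

/-- `θ_3F` is an exchange-statistics function whose braiding is `-1` between any
two distinct nonzero anyons, and the three-fermion theory admits no Lagrangian
subgroup. -/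
theorem threeFermion_theory :
    IsExchangeStats theta3F ∧
    (∀ x y : ZMod 2 × ZMod 2, x ≠ 0 → y ≠ 0 → x ≠ y → braiding theta3F x y = -1) ∧
    (∀ L : AddSubgroup (ZMod 2 × ZMod 2), ¬ IsLagrangian theta3F L) :=
  ⟨isExchangeStats_theta3F,
    fun _ _ => braiding_theta3F_of_ne,
    isExchangeStats_theta3F.not_isLagrangian_of_forall_eq_zero
      fun _ => eq_zero_of_theta3F_eq_one⟩
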